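/- Let m ≥ 2 be an integer and let M, N be coprime integers with N odd and positive, and set ζ = e^{2πiM/N}. Then Z_{m,N}(ζ) = −(1/(8(2m−1)N²))·e^{−2πiM(2m−3)²/(8(2m−1)N)}·Σ_{k=0}^{(4m−2)N} k²·χ_{4m−2}(k)·e^{2πiMk²/(8(2m−1)N)}. -/

import Mathlib

open Finset

/-- The q-Pochhammer symbol `(x;q)_n = ∏_{j=0}^{n-1} (1 - x q^j)`. -/
noncomputable def qPoch (x q : ℂ) (n : ℕ) : ℂ := ∏ j ∈ Finset.range n, (1 - x * q ^ j)

/-- The Gaussian binomial coefficient `[n choose k]_q`. -/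
noncomputable def qBinom (q : ℂ) (n k : ℕ) : ℂ :=
  if k ≤ n then qPoch q q n / (qPoch q q (n - k) * qPoch q q k) else 0

/-- Extend a tuple `g : Fin k → ℕ` to `ℕ → ℕ` by zero. -/
def pad (k : ℕ) (g : Fin k → ℕ) : ℕ → ℕ := fun j => if h : j < k then g ⟨j, h⟩ else 0

/-- The general term of the multi-sum `P_m(q)`: here `n j` denotes `n_{j+1}` (0-based indexing),
so `n (m-2)` is `n_{m-1}` and `n 0` is `n_1`. -/
noncomputable def Pterm (m : ℕ) (q : ℂ) (n : ℕ → ℕ) : ℂ :=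
  (-1) ^ (n (m - 2)) *
    q ^ (n (m - 2) * (n (m - 2) + 1) / 2 + ∑ j ∈ Finset.range (m - 2), ((n j) ^ 2 + n j)) /
    qPoch (-q) q (n 0) *
    ∏ i ∈ Finset.range (m - 2), qBinom q (n (i + 1)) (n i)

/-- The multi-sum `P_m(q)`. -/
noncomputable def P (m : ℕ) (q : ℂ) : ℂ := ∑' n : Fin (m - 1) → ℕ, Pterm m q (pad (m - 1) n)

/-- The truncated multi-sum `Z_{m,N}(q)`. -/
noncomputable def Z (m N : ℕ) (q : ℂ) : ℂ :=
  ∑ n ∈ Fintype.piFinset (fun _ : Fin (m - 1) => Finset.range N), Pterm m q (pad (m - 1) n)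

/-- The odd periodic function `χ_{4m-2}`. -/
def chiP (m : ℕ) (k : ℤ) : ℤ :=
  if k % (4 * m - 2) = (2 * (m : ℤ) - 3) % (4 * m - 2) then 1
  else if k % (4 * m - 2) = (2 * (m : ℤ) + 1) % (4 * m - 2) then -1
  else 0

lemma qPoch_zero (x q : ℂ) : qPoch x q 0 = 1 := by simp [qPoch]

lemma qPoch_succ (x q : ℂ) (n : ℕ) : qPoch x q (n + 1) = qPoch x q n * (1 - x * q ^ n) := by
  simp [qPoch, Finset.prod_range_succ]

lemma qPoch_add (x q : ℂ) (a b : ℕ) :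
    qPoch x q (a + b) = qPoch x q a * qPoch (x * q ^ a) q b := by
  simp only [qPoch, Finset.prod_range_add]
  congr 1
  apply Finset.prod_congr rfl
  intro i _
  ring

lemma qPoch_ne_zero (x q : ℂ) (n : ℕ) (h : ∀ j < n, 1 - x * q ^ j ≠ 0) : qPoch x q n ≠ 0 := by
  rw [qPoch, Finset.prod_ne_zero_iff]
  intro j hj
  exact h j (Finset.mem_range.1 hj)

lemma wz_step (T : ℕ → ℕ → ℂ) (G : ℕ → ℂ) (n : ℕ) (h0 : G 0 = 0)
    (h : ∀ r ≤ n, T (n + 1) r - T n r = G (r + 1) - G r)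
    (hl : T (n + 1) (n + 1) = -G (n + 1)) :
    ∑ r ∈ range (n + 1 + 1), T (n + 1) r = ∑ r ∈ range (n + 1), T n r := by
  rw [Finset.sum_range_succ, hl]
  have h1 : ∑ r ∈ range (n + 1), (T (n + 1) r - T n r) = G (n + 1) - G 0 := by
    rw [← Finset.sum_range_sub]
    apply Finset.sum_congr rfl
    intro r hr
    exact h r (by have := Finset.mem_range.1 hr; omega)
  rw [Finset.sum_sub_distrib, h0] at h1
  linear_combination h1

/-- limiting case of the q-Chu-Vandermonde summation. -/
lemma chu (q A : ℂ) (N : ℕ) (hq : ∀ j, j + 1 < N → 1 - q * q ^ j ≠ 0)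
    (hA : ∀ j, 1 - A * q * q ^ j ≠ 0) (k : ℕ) (hk : k < N) :
    ∑ s ∈ range (k + 1), A ^ s * q ^ (s ^ 2) * (qPoch q q k * qPoch (A * q) q k) /
      (qPoch q q (k - s) * qPoch q q s * qPoch (A * q) q s) = 1 := by
  have hP : ∀ n < N, qPoch q q n ≠ 0 := fun n hn =>
    qPoch_ne_zero _ _ _ fun j hj => hq j (by omega)
  have hR : ∀ n, qPoch (A * q) q n ≠ 0 := fun n => qPoch_ne_zero _ _ _ fun j hj => hA j
  induction k with
  | zero => simp [qPoch_zero]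
  | succ k ih =>
    refine Eq.trans ?_ (ih (by omega))
    apply wz_step (fun k s => A ^ s * q ^ (s ^ 2) * (qPoch q q k * qPoch (A * q) q k) /
      (qPoch q q (k - s) * qPoch q q s * qPoch (A * q) q s))
      (fun s => - (A ^ s * q ^ (s ^ 2) * (qPoch q q k * qPoch (A * q) q k) /
      (qPoch q q (k + 1 - s) * qPoch q q s * qPoch (A * q) q s)) * q ^ (k + 1 - s) * (1 - q ^ s)
        * (1 - A * q ^ s)) k
    · simp
    · intro r hr
      obtain ⟨d, rfl⟩ := Nat.exists_eq_add_of_le hr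
      have e1 : r + d + 1 - r = d + 1 := by omega
      have e2 : r + d - r = d := by omega
      have e3 : r + d + 1 - (r + 1) = d := by omega
      simp only [e1, e2, e3, qPoch_succ]
      have a1 := hP d (by omega)
      have a2 := hP r (by omega)
      have a3 := hR r
      have a4 := hP (r + d) (by omega)
      have a5 := hR (r + d)
      have a6 := hq d (by omega)
      have a7 := hq r (by omega)
      have a8 := hA r
      have e4 : q ^ ((r + 1) ^ 2) = q ^ (r ^ 2) * (q ^ r) ^ 2 * q := by ring
      have e5 : q ^ (r + d) = q ^ r * q ^ d := by ring
      have e6 : q ^ (d + 1) = q ^ d * q := by ring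
      have e7 : q ^ (r + 1) = q ^ r * q := by ring
      have e8 : A ^ (r + 1) = A ^ r * A := by ring
      rw [e4, e5, e6, e7, e8]
      generalize q ^ (r ^ 2) = u at *
      generalize q ^ r = z at *
      generalize q ^ d = w at *
      generalize A ^ r = v at *
      generalize qPoch q q d = p1 at *
      generalize qPoch q q r = p2 at *
      generalize qPoch (A * q) q r = p3 at *
      generalize qPoch q q (r + d) = p4 at *
      generalize qPoch (A * q) q (r + d) = p5 at *
      generalize hb : 1 - A * q * z = B at *
      generalize hb1 : 1 - q * w = B1 at *
      generalize hb2 : 1 - q * z = B2 at *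
      have hb2' : 1 - z * q = B2 := by rw [← hb2]; ring
      have hb' : 1 - A * (z * q) = B := by rw [← hb]; ring
      rw [hb2', hb']
      field_simp
      subst hb hb1 hb2
      ring
    · have a2 := hP (k + 1) hk
      have a3 := hR (k + 1)
      simp only [Nat.sub_self, qPoch_zero, pow_zero]
      have e1 : qPoch q q (k + 1) = qPoch q q k * (1 - q ^ (k + 1)) := by rw [qPoch_succ]; ring
      have e2 : qPoch (A * q) q (k + 1) = qPoch (A * q) q k * (1 - A * q ^ (k + 1)) := by
        rw [qPoch_succ]; ring
      field_simp
      rw [e1, e2]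
      ring

/-- The seed Bailey pair. -/
lemma seed (q y : ℂ) (N : ℕ) (hq : ∀ j, j + 1 < N → 1 - q * q ^ j ≠ 0)
    (ha : ∀ j, 1 - q * y ^ 2 * q ^ j ≠ 0) (hy : ∀ j, 1 - -(q * y) * q ^ j ≠ 0)
    (k : ℕ) (hk : k < N) :
    ∑ s ∈ range (k + 1), (-1) ^ s * y ^ s * q ^ (s ^ 2) * qPoch (q * y ^ 2) q s *
      (1 - q * y ^ 2 * q ^ (2 * s)) * (qPoch q q k * qPoch (-(q * y)) q k) /
      (qPoch q q (k - s) * qPoch q q s * qPoch (q * y ^ 2) q (k + s + 1)) = 1 := by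
  have hP : ∀ n < N, qPoch q q n ≠ 0 := fun n hn =>
    qPoch_ne_zero _ _ _ fun j hj => hq j (by omega)
  have hR : ∀ n, qPoch (q * y ^ 2) q n ≠ 0 := fun n => qPoch_ne_zero _ _ _ fun j hj => ha j
  have hS : ∀ n, qPoch (-(q * y)) q n ≠ 0 := fun n => qPoch_ne_zero _ _ _ fun j hj => hy j
  induction k with
  | zero =>
    have := ha 0
    simp [qPoch_zero, qPoch_succ] at this ⊢
    exact this
  | succ k ih =>
    refine Eq.trans ?_ (ih (by omega))
    apply wz_step (fun k s => (-1) ^ s * y ^ s * q ^ (s ^ 2) * qPoch (q * y ^ 2) q s *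
      (1 - q * y ^ 2 * q ^ (2 * s)) * (qPoch q q k * qPoch (-(q * y)) q k) /
      (qPoch q q (k - s) * qPoch q q s * qPoch (q * y ^ 2) q (k + s + 1)))
      (fun s => - ((-1) ^ s * y ^ s * q ^ (s ^ 2) * qPoch (q * y ^ 2) q s *
       (qPoch q q k * qPoch (-(q * y)) q k) /
      (qPoch q q (k + 1 - s) * qPoch q q s * qPoch (q * y ^ 2) q (k + s + 1))) * q ^ (k + 1 - s)
        * (1 - q ^ s) * (1 + y * q ^ s)) k
    · simp
    · intro r hr
      obtain ⟨d, rfl⟩ := Nat.exists_eq_add_of_le hr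
      have e1 : r + d + 1 - r = d + 1 := by omega
      have e2 : r + d - r = d := by omega
      have e3 : r + d + 1 - (r + 1) = d := by omega
      have e0 : r + d + (r + 1) + 1 = r + d + r + 1 + 1 := by omega
      have e0' : r + d + 1 + r + 1 = r + d + r + 1 + 1 := by omega
      simp only [e1, e2, e3, e0, e0']
      rw [qPoch_succ _ _ (r + d + r + 1)]
      have b1 := hR (r + d + r + 1)
      have b2 := ha (r + d + r + 1)
      generalize qPoch (q * y ^ 2) q (r + d + r + 1) = p6 at *
      simp only [qPoch_succ]
      have a1 := hP d (by omega)
      have a2 := hP r (by omega)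
      have a3 := hR r
      have a4 := hP (r + d) (by omega)
      have a5 := hS (r + d)
      have a6 := hq d (by omega)
      have a7 := hq r (by omega)
      have a8 := hy r
      have e4 : q ^ ((r + 1) ^ 2) = q ^ (r ^ 2) * (q ^ r) ^ 2 * q := by ring
      have e5 : q ^ (r + d) = q ^ r * q ^ d := by ring
      have e6 : q ^ (d + 1) = q ^ d * q := by ring
      have e7 : q ^ (r + 1) = q ^ r * q := by ring
      have e8 : y ^ (r + 1) = y ^ r * y := by ring
      have e9 : q ^ (2 * r) = (q ^ r) ^ 2 := by ring
      have e10 : q ^ (r + d + r + 1) = q ^ r * q ^ d * q ^ r * q := by ring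
      have e11 : (-1 : ℂ) ^ (r + 1) = - (-1) ^ r := by ring
      rw [e10] at b2
      rw [e4, e5, e6, e7, e8, e9, e10, e11]
      generalize q ^ (r ^ 2) = u at *
      generalize q ^ r = z at *
      generalize q ^ d = w at *
      generalize y ^ r = v at *
      generalize (-1 : ℂ) ^ r = sg at *
      generalize qPoch q q d = p1 at *
      generalize qPoch q q r = p2 at *
      generalize qPoch (q * y ^ 2) q r = p3 at *
      generalize qPoch q q (r + d) = p4 at *
      generalize qPoch (-(q * y)) q (r + d) = p5 at *
      generalize hb : 1 - q * y ^ 2 * (z * w * z * q) = B at *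
      generalize hb1 : 1 - q * w = B1 at *
      generalize hb2 : 1 - q * z = B2 at *
      have hb2' : 1 - z * q = B2 := by rw [← hb2]; ring
      rw [hb2']
      field_simp
      subst hb hb1 hb2
      ring
    · have a2 := hP (k + 1) hk
      have a3 := hR (k + 1)
      have a4 := hR (k + (k + 1) + 1)
      have a5 := ha (k + (k + 1) + 1)
      have e0 : k + 1 + (k + 1) + 1 = k + (k + 1) + 1 + 1 := by omega
      simp only [Nat.sub_self, qPoch_zero, pow_zero, e0]
      rw [qPoch_succ _ _ (k + (k + 1) + 1)]
      have e1 : qPoch q q (k + 1) = qPoch q q k * (1 - q ^ (k + 1)) := by rw [qPoch_succ]; ring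
      have e2 : qPoch (-(q * y)) q (k + 1) = qPoch (-(q * y)) q k * (1 + y * q ^ (k + 1)) := by
        rw [qPoch_succ]; ring
      have e3 : q * y ^ 2 * q ^ (2 * (k + 1)) = q * y ^ 2 * q ^ (k + (k + 1) + 1) := by ring
      rw [e3]
      field_simp
      rw [e1, e2]
      ring
/-- Iterated Bailey step (with deformation parameter `y`). -/
noncomputable def bB (q y : ℂ) : ℕ → ℕ → ℂ
  | 0, n => 1 / qPoch (-(q * y)) q n
  | i + 1, n => ∑ r ∈ range (n + 1), (q * y ^ 2) ^ r * q ^ (r ^ 2) * qBinom q n r * bB q y i r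

/-- Coefficients of the Bailey pair. -/
noncomputable def cB (q y : ℂ) (i r : ℕ) : ℂ :=
  (-1) ^ r * y ^ r * q ^ (r ^ 2) * qPoch (q * y ^ 2) q r * (1 - q * y ^ 2 * q ^ (2 * r)) *
    ((q * y ^ 2) ^ r * q ^ (r ^ 2)) ^ i / qPoch q q r

lemma sum_swap (f : ℕ → ℕ → ℂ) (n : ℕ) :
    ∑ j ∈ range (n + 1), ∑ r ∈ range (j + 1), f j r =
      ∑ r ∈ range (n + 1), ∑ s ∈ range (n - r + 1), f (r + s) r := by
  rw [Finset.sum_comm' (t' := range (n + 1)) (s' := fun r => Finset.Ico r (n + 1))]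
  · apply Finset.sum_congr rfl
    intro r hr
    have := Finset.mem_range.1 hr
    rw [Finset.sum_Ico_eq_sum_range, show n + 1 - r = n - r + 1 by omega]
  · intro x y
    simp only [Finset.mem_range, Finset.mem_Ico]
    omega

lemma bailey (q y : ℂ) (N : ℕ) (hq : ∀ j, j + 1 < N → 1 - q * q ^ j ≠ 0)
    (ha : ∀ j, 1 - q * y ^ 2 * q ^ j ≠ 0) (hy : ∀ j, 1 - -(q * y) * q ^ j ≠ 0)
    (i n : ℕ) (hn : n < N) :
    bB q y i n = ∑ r ∈ range (n + 1), cB q y i r * qPoch q q n /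
      (qPoch q q (n - r) * qPoch (q * y ^ 2) q (n + r + 1)) := by
  have hP : ∀ n < N, qPoch q q n ≠ 0 := fun n hn =>
    qPoch_ne_zero _ _ _ fun j hj => hq j (by omega)
  have hR : ∀ n, qPoch (q * y ^ 2) q n ≠ 0 := fun n => qPoch_ne_zero _ _ _ fun j hj => ha j
  have hS : ∀ n, qPoch (-(q * y)) q n ≠ 0 := fun n => qPoch_ne_zero _ _ _ fun j hj => hy j
  induction i generalizing n with
  | zero =>
    have h := seed q y N hq ha hy n hn
    rw [bB, div_eq_iff (hS n), Finset.sum_mul, ← h]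
    apply Finset.sum_congr rfl
    intro r hr
    simp only [cB, pow_zero, mul_one]
    have := Finset.mem_range.1 hr
    have a1 := hP r (by omega)
    have a2 := hP (n - r) (by omega)
    have a3 := hR (n + r + 1)
    field_simp
  | succ i ih =>
    rw [bB]
    have h1 : ∀ j ∈ range (n + 1),
        (q * y ^ 2) ^ j * q ^ (j ^ 2) * qBinom q n j * bB q y i j =
        ∑ r ∈ range (j + 1), (q * y ^ 2) ^ j * q ^ (j ^ 2) * qBinom q n j *
          (cB q y i r * qPoch q q j / (qPoch q q (j - r) * qPoch (q * y ^ 2) q (j + r + 1))) := by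
      intro j hj
      have := Finset.mem_range.1 hj
      rw [ih j (by omega), Finset.mul_sum]
    rw [Finset.sum_congr rfl h1, sum_swap]
    apply Finset.sum_congr rfl
    intro r hr
    have hrn := Finset.mem_range.1 hr
    obtain ⟨k, rfl⟩ := Nat.exists_eq_add_of_le (show r ≤ n by omega)
    have e1 : r + k - r = k := by omega
    rw [e1]
    have hA : ∀ j, 1 - q * y ^ 2 * q ^ (2 * r) * q * q ^ j ≠ 0 := by
      intro j
      have := ha (2 * r + 1 + j)
      convert this using 2
      ring
    have hA' : ∀ n, qPoch (q * y ^ 2 * q ^ (2 * r) * q) q n ≠ 0 :=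
      fun n => qPoch_ne_zero _ _ _ fun j hj => hA j
    have h2 := chu q (q * y ^ 2 * q ^ (2 * r)) N hq hA k (by omega)
    have hadd : ∀ s, qPoch (q * y ^ 2) q (r + s + r + 1) = qPoch (q * y ^ 2) q (2 * r + 1) *
        qPoch (q * y ^ 2 * q ^ (2 * r) * q) q s := by
      intro s
      rw [show r + s + r + 1 = 2 * r + 1 + s by ring, qPoch_add]
      congr 2
      ring
    rw [hadd]
    have h3 : cB q y (i + 1) r * qPoch q q (r + k) /
      (qPoch q q k * (qPoch (q * y ^ 2) q (2 * r + 1) *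
        qPoch (q * y ^ 2 * q ^ (2 * r) * q) q k)) =
      cB q y (i + 1) r * qPoch q q (r + k) /
      (qPoch q q k * (qPoch (q * y ^ 2) q (2 * r + 1) *
        qPoch (q * y ^ 2 * q ^ (2 * r) * q) q k)) * 1 := by ring
    rw [h3, ← h2, Finset.mul_sum]
    apply Finset.sum_congr rfl
    intro s hs
    have hsk := Finset.mem_range.1 hs
    have e2 : r + s - r = s := by omega
    have e3 : r + k - (r + s) = k - s := by omega
    rw [hadd, e2, qBinom, if_pos (by omega), e3]
    have h4 : cB q y (i + 1) r = cB q y i r * ((q * y ^ 2) ^ r * q ^ (r ^ 2)) := by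
      simp only [cB]; ring
    rw [h4]
    have e4 : (q * y ^ 2) ^ (r + s) * q ^ ((r + s) ^ 2) =
      ((q * y ^ 2) ^ r * q ^ (r ^ 2)) * ((q * y ^ 2 * q ^ (2 * r)) ^ s * q ^ (s ^ 2)) := by ring
    rw [e4]
    have a1 := hP k (by omega)
    have a2 := hP (k - s) (by omega)
    have a3 := hP s (by omega)
    have a4 := hP (r + s) (by omega)
    have a5 := hR (2 * r + 1)
    have a6 := hA' k
    have a7 := hA' s
    generalize (q * y ^ 2) ^ r * q ^ (r ^ 2) = u
    generalize (q * y ^ 2 * q ^ (2 * r)) ^ s * q ^ (s ^ 2) = v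
    generalize cB q y i r = w
    generalize qPoch (q * y ^ 2 * q ^ (2 * r) * q) q k = p1 at *
    generalize qPoch (q * y ^ 2 * q ^ (2 * r) * q) q s = p2 at *
    generalize qPoch (q * y ^ 2) q (2 * r + 1) = p3 at *
    generalize qPoch q q k = p4 at *
    generalize qPoch q q s = p5 at *
    generalize qPoch q q (k - s) = p6 at *
    generalize qPoch q q (r + s) = p7 at *
    field_simp

lemma two_tri (n : ℕ) : n * (n + 1) / 2 * 2 = n * (n + 1) :=
  Nat.div_mul_cancel (Nat.even_mul_succ_self n).two_dvd

lemma tri_succ (n : ℕ) : (n + 1) * (n + 1 + 1) / 2 = n * (n + 1) / 2 + (n + 1) := by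
  have h1 := two_tri n
  have h2 := two_tri (n + 1)
  have h3 : (n + 1) * (n + 1 + 1) = n * (n + 1) + 2 * (n + 1) := by ring
  omega

/-- Gaussian binomial at a root of unity. -/
lemma binom_root (q : ℂ) (N : ℕ) (hqN : q ^ N = 1)
    (r : ℕ) (hr : r < N) :
    qPoch q q (N - 1) * q ^ (r * (r + 1) / 2) =
      (-1) ^ r * (qPoch q q (N - 1 - r) * qPoch q q r) := by
  induction r with
  | zero => simp [qPoch_zero]
  | succ r ih =>
    have h := ih (by omega)
    rw [tri_succ, pow_add, ← mul_assoc, h]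
    obtain ⟨d, rfl⟩ := Nat.exists_eq_add_of_le (show r + 2 ≤ N by omega)
    have e1 : r + 2 + d - 1 - r = d + 1 := by omega
    have e2 : r + 2 + d - 1 - (r + 1) = d := by omega
    rw [e1, e2, qPoch_succ, qPoch_succ]
    have h5 : q * q ^ d * q ^ (r + 1) = 1 := by rw [← hqN]; ring
    linear_combination (- (-1) ^ r * qPoch q q r * qPoch q q d) * h5

lemma poch_root (q : ℂ) (N : ℕ) (hN : 0 < N) (hp : IsPrimitiveRoot q N) (a : ℂ) :
    qPoch a q N = 1 - a ^ N := by
  have h := IsPrimitiveRoot.pow_sub_pow_eq_prod_sub_mul 1 a hN hp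
  rw [one_pow] at h
  rw [h, qPoch]
  apply Finset.prod_bij (fun j _ => q ^ j)
  · intro j _
    rw [Polynomial.mem_nthRootsFinset hN, ← pow_mul, mul_comm, pow_mul, hp.pow_eq_one, one_pow]
  · intro i hi j hj hij
    exact hp.pow_inj (Finset.mem_range.1 hi) (Finset.mem_range.1 hj) hij
  · intro b hb
    rw [Polynomial.mem_nthRootsFinset hN] at hb
    have : NeZero N := ⟨hN.ne'⟩
    obtain ⟨i, hi, rfl⟩ := hp.eq_pow_of_pow_eq_one hb
    exact ⟨i, Finset.mem_range.2 hi, rfl⟩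
  · intro j _
    ring
lemma hq_of_root (q : ℂ) (N : ℕ) (hp : IsPrimitiveRoot q N) :
    ∀ j, j + 1 < N → 1 - q * q ^ j ≠ 0 := by
  intro j hj h
  have h1 : q ^ (j + 1) = 1 := by rw [pow_succ]; linear_combination -h
  exact hp.pow_ne_one_of_pos_of_lt (by omega) hj h1

lemma tri_add (r : ℕ) : r ^ 2 = r * (r + 1) / 2 + r * (r - 1) / 2 := by
  cases r with
  | zero => simp
  | succ n =>
    rw [tri_succ, Nat.add_sub_cancel]
    have h1 := two_tri n
    have h2 : (n + 1) * n = n * (n + 1) := by ring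
    have h3 : (n + 1) ^ 2 = n * (n + 1) + (n + 1) := by ring
    omega

lemma main_deform (q y : ℂ) (N : ℕ) (hN : 0 < N) (hp : IsPrimitiveRoot q N)
    (hy : y ^ (2 * N) ≠ 1) (i : ℕ) :
    (1 - y ^ (2 * N)) * bB q y i (N - 1) =
      ∑ r ∈ range N, q ^ (r * (r - 1) / 2 + i * (r ^ 2 + r)) * y ^ ((2 * i + 1) * r) *
        (1 - y ^ 2 * q ^ (2 * r + 1)) := by
  have hqN := hp.pow_eq_one
  have hq := hq_of_root q N hp
  have ha : ∀ j, 1 - q * y ^ 2 * q ^ j ≠ 0 := by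
    intro j h
    apply hy
    have h1 : q * y ^ 2 * q ^ j = 1 := by linear_combination -h
    have h2 : (q * y ^ 2 * q ^ j) ^ N = y ^ (2 * N) * (q ^ N) ^ (j + 1) := by ring
    rw [h1, hqN] at h2
    simpa using h2.symm
  have hy' : ∀ j, 1 - -(q * y) * q ^ j ≠ 0 := by
    intro j h
    apply hy
    have h1 : -(q * y) * q ^ j = 1 := by linear_combination -h
    have h2 : ((-(q * y) * q ^ j) ^ 2) ^ N = y ^ (2 * N) * (q ^ N) ^ (2 * (j + 1)) := by ring
    rw [h1, hqN] at h2
    simpa using h2.symm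
  have hP : ∀ n < N, qPoch q q n ≠ 0 := fun n hn =>
    qPoch_ne_zero _ _ _ fun j hj => hq j (by omega)
  have hR : ∀ n, qPoch (q * y ^ 2) q n ≠ 0 := fun n => qPoch_ne_zero _ _ _ fun j hj => ha j
  rw [bailey q y N hq ha hy' i (N - 1) (by omega), Finset.mul_sum, Nat.sub_add_cancel hN]
  apply Finset.sum_congr rfl
  intro r hr
  have hrN := Finset.mem_range.1 hr
  have e1 : N - 1 + r + 1 = N + r := by omega
  have e2 : qPoch (q * y ^ 2) q (N + r) = (1 - y ^ (2 * N)) * qPoch (q * y ^ 2) q r := by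
    rw [qPoch_add, poch_root q N hN hp, hqN, mul_one, mul_pow, hqN, ← pow_mul, one_mul]
  rw [e1, e2, cB]
  have h3 := binom_root q N hqN r hrN
  have a1 : 1 - y ^ (2 * N) ≠ 0 := fun h => hy (by linear_combination -h)
  have a2 := hR r
  have a3 := hP r hrN
  have a4 := hP (N - 1 - r) (by omega)
  have e3 : q ^ (r ^ 2) = q ^ (r * (r + 1) / 2) * q ^ (r * (r - 1) / 2) := by
    rw [← pow_add, ← tri_add]
  have e4 : q ^ (r * (r - 1) / 2 + i * (r ^ 2 + r)) * y ^ ((2 * i + 1) * r) =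
      q ^ (r * (r - 1) / 2) * y ^ r * ((q * y ^ 2) ^ r * q ^ (r ^ 2)) ^ i := by
    rw [pow_add]; ring
  have e5 : y ^ 2 * q ^ (2 * r + 1) = q * y ^ 2 * q ^ (2 * r) := by ring
  rw [e4, e5]
  generalize ((q * y ^ 2) ^ r * q ^ (r ^ 2)) ^ i = u at *
  rw [e3]
  have e6 : ((-1 : ℂ) ^ r) * (-1) ^ r = 1 := by rw [← mul_pow]; simp
  field_simp
  linear_combination (y ^ r * q ^ (r * (r - 1) / 2) * u) *
    (((-1) ^ r * (1 - q * y ^ 2 * q ^ (2 * r))) * h3 +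
    (qPoch q q (N - 1 - r) * qPoch q q r * (1 - q * y ^ 2 * q ^ (2 * r))) * e6)

lemma sum_snoc (N k : ℕ) (f : (Fin (k + 1) → ℕ) → ℂ) :
    ∑ g ∈ Fintype.piFinset (fun _ : Fin (k + 1) => range N), f g =
      ∑ n ∈ range N, ∑ g ∈ Fintype.piFinset (fun _ : Fin k => range N),
        f (Fin.snoc (α := fun _ => ℕ) g n) := by
  rw [← Finset.sum_product']
  refine Finset.sum_bij' (fun g _ => (g (Fin.last k), Fin.init (α := fun _ => ℕ) g))
    (fun p _ => Fin.snoc (α := fun _ => ℕ) p.2 p.1) ?_ ?_ ?_ ?_ ?_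
  · intro g hg
    rw [Fintype.mem_piFinset] at hg
    rw [Finset.mem_product, Fintype.mem_piFinset]
    exact ⟨hg _, fun j => hg _⟩
  · intro p hp
    rw [Finset.mem_product, Fintype.mem_piFinset] at hp
    rw [Fintype.mem_piFinset]
    intro j
    refine Fin.lastCases ?_ ?_ j
    · simpa using hp.1
    · intro j
      simpa using hp.2 j
  · intro g _
    simp
  · intro p _
    simp
  · intro g _
    simp

noncomputable def core (k : ℕ) (q : ℂ) (p : ℕ → ℕ) : ℂ :=
  q ^ (∑ j ∈ range k, ((p j) ^ 2 + p j)) / qPoch (-q) q (p 0) *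
    ∏ i ∈ range k, qBinom q (p (i + 1)) (p i)

lemma pad_snoc_last (k : ℕ) (g : Fin k → ℕ) (n : ℕ) :
    pad (k + 1) (Fin.snoc (α := fun _ => ℕ) g n) k = n := by
  simp only [pad, Nat.lt_succ_self, dif_pos]
  exact Fin.snoc_last (α := fun _ => ℕ) n g

lemma pad_snoc_lt (k : ℕ) (g : Fin k → ℕ) (n j : ℕ) (hj : j < k) :
    pad (k + 1) (Fin.snoc (α := fun _ => ℕ) g n) j = pad k g j := by
  simp only [pad, hj, Nat.lt_succ_of_lt hj, dif_pos]
  exact Fin.snoc_castSucc (α := fun _ => ℕ) n g ⟨j, hj⟩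

lemma core_snoc (k : ℕ) (q : ℂ) (g : Fin (k + 1) → ℕ) (n : ℕ) :
    core (k + 1) q (pad (k + 2) (Fin.snoc (α := fun _ => ℕ) g n)) =
      q ^ (pad (k + 1) g k ^ 2 + pad (k + 1) g k) * qBinom q n (pad (k + 1) g k) *
        core k q (pad (k + 1) g) := by
  have h : ∀ j < k + 1, pad (k + 2) (Fin.snoc (α := fun _ => ℕ) g n) j = pad (k + 1) g j :=
    fun j hj => pad_snoc_lt (k + 1) g n j hj
  simp only [core]
  rw [Finset.sum_range_succ, Finset.prod_range_succ, pad_snoc_last (k + 1) g n, h k (by omega),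
    h 0 (by omega)]
  have h1 : ∑ j ∈ range k, (pad (k + 2) (Fin.snoc (α := fun _ => ℕ) g n) j ^ 2 +
      pad (k + 2) (Fin.snoc (α := fun _ => ℕ) g n) j) =
      ∑ j ∈ range k, (pad (k + 1) g j ^ 2 + pad (k + 1) g j) := by
    apply Finset.sum_congr rfl
    intro j hj
    have := Finset.mem_range.1 hj
    rw [h j (by omega)]
  have h2 : ∏ i ∈ range k, qBinom q (pad (k + 2) (Fin.snoc (α := fun _ => ℕ) g n) (i + 1))
      (pad (k + 2) (Fin.snoc (α := fun _ => ℕ) g n) i) =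
      ∏ i ∈ range k, qBinom q (pad (k + 1) g (i + 1)) (pad (k + 1) g i) := by
    apply Finset.prod_congr rfl
    intro j hj
    have := Finset.mem_range.1 hj
    rw [h j (by omega), h (j + 1) (by omega)]
  rw [h1, h2, pow_add]
  ring

lemma multi_sum (q : ℂ) (N k : ℕ) (F : ℕ → ℂ) :
    ∑ g ∈ Fintype.piFinset (fun _ : Fin (k + 1) => range N),
      F (pad (k + 1) g k) * core k q (pad (k + 1) g) = ∑ n ∈ range N, F n * bB q 1 k n := by
  induction k generalizing F with
  | zero =>
    rw [sum_snoc]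
    apply Finset.sum_congr rfl
    intro n _
    simp [core, bB, pad_snoc_last]
  | succ k ih =>
    rw [sum_snoc]
    apply Finset.sum_congr rfl
    intro n hn
    have hnN := Finset.mem_range.1 hn
    have h1 : ∀ g ∈ Fintype.piFinset (fun _ : Fin (k + 1) => range N),
      F (pad (k + 1 + 1) (Fin.snoc (α := fun _ => ℕ) g n) (k + 1)) *
        core (k + 1) q (pad (k + 1 + 1) (Fin.snoc (α := fun _ => ℕ) g n)) =
      F n * ((fun r => q ^ (r ^ 2 + r) * qBinom q n r) (pad (k + 1) g k) *
        core k q (pad (k + 1) g)) := by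
      intro g _
      rw [pad_snoc_last, core_snoc]
    rw [Finset.sum_congr rfl h1, ← Finset.mul_sum, ih (fun r => q ^ (r ^ 2 + r) * qBinom q n r), bB]
    congr 1
    rw [← Finset.sum_subset (Finset.range_subset_range.2 (show n + 1 ≤ N by omega))]
    · apply Finset.sum_congr rfl
      intro r _
      simp only [one_pow, mul_one]
      ring
    · intro r _ hr
      have : ¬ r ≤ n := by
        intro h
        exact hr (Finset.mem_range.2 (by omega))
      simp [qBinom, this]

lemma Z_eq (q : ℂ) (N k : ℕ) (hN : 0 < N) (hp : IsPrimitiveRoot q N) :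
    Z (k + 2) N q = bB q 1 (k + 1) (N - 1) := by
  have h := multi_sum q N k (fun n => (-1) ^ n * q ^ (n * (n + 1) / 2))
  have h1 : Z (k + 2) N q = ∑ g ∈ Fintype.piFinset (fun _ : Fin (k + 1) => range N),
      (fun n => (-1) ^ n * q ^ (n * (n + 1) / 2)) (pad (k + 1) g k) * core k q (pad (k + 1) g) := by
    rw [Z]
    show ∑ g ∈ Fintype.piFinset (fun _ : Fin (k + 1) => range N), _ = _
    apply Finset.sum_congr rfl
    intro g _
    simp only [Pterm, core]
    show (-1) ^ (pad (k + 1) g k) * q ^ (pad (k + 1) g k * (pad (k + 1) g k + 1) / 2 +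
      ∑ j ∈ range k, (pad (k + 1) g j ^ 2 + pad (k + 1) g j)) / qPoch (-q) q (pad (k + 1) g 0) *
      ∏ i ∈ range k, qBinom q (pad (k + 1) g (i + 1)) (pad (k + 1) g i) = _
    rw [pow_add]
    ring
  rw [h1, h, bB, Nat.sub_add_cancel hN]
  apply Finset.sum_congr rfl
  intro r hr
  have hrN := Finset.mem_range.1 hr
  have hq := hq_of_root q N hp
  have hP : ∀ n < N, qPoch q q n ≠ 0 := fun n hn =>
    qPoch_ne_zero _ _ _ fun j hj => hq j (by omega)
  have h3 := binom_root q N hp.pow_eq_one r hrN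
  have a3 := hP r hrN
  have a4 := hP (N - 1 - r) (by omega)
  congr 1
  rw [qBinom, if_pos (by omega)]
  have e1 : (q * 1 ^ 2) ^ r * q ^ (r ^ 2) = q ^ (r * (r + 1) / 2) * q ^ (r * (r + 1) / 2) := by
    rw [← pow_add, one_pow, mul_one, ← pow_add]
    congr 1
    have := two_tri r
    have h4 : r + r ^ 2 = r * (r + 1) := by ring
    omega
  rw [e1]
  field_simp
  linear_combination -(q ^ (r * (r + 1) / 2)) * h3
lemma bB_diff (q : ℂ) (h : ∀ j, 1 - -(q * 1) * q ^ j ≠ 0) (i n : ℕ) :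
    DifferentiableAt ℂ (fun y => bB q y i n) 1 := by
  induction i generalizing n with
  | zero =>
    simp only [bB]
    have h1 : qPoch (-(q * 1)) q n ≠ 0 := qPoch_ne_zero _ _ _ fun j _ => h j
    have h2 : DifferentiableAt ℂ (fun y => qPoch (-(q * y)) q n) 1 := by
      simp only [qPoch]
      fun_prop
    exact (differentiableAt_const _).div h2 h1
  | succ i ih =>
    simp only [bB]
    have := fun r => ih r
    fun_prop

lemma sym_pow (q : ℂ) (N : ℕ) (hN : 0 < N) (hodd : Odd N) (hp : IsPrimitiveRoot q N)
    (i r : ℕ) (hr : r < N) :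
    q ^ ((N - 1 - r) * ((N - 1 - r) - 1) / 2 + i * ((N - 1 - r) ^ 2 + (N - 1 - r))) =
      q ^ (r * (r - 1) / 2 + i * (r ^ 2 + r)) * q ^ (2 * r + 1) := by
  obtain ⟨s, rfl⟩ : ∃ s, N = s + r + 1 := ⟨N - 1 - r, by omega⟩
  have e : s + r + 1 - 1 - r = s := by omega
  rw [e, ← pow_add]
  refine pow_eq_pow_of_modEq ?_ hp.pow_eq_one
  have hc : Nat.gcd (s + r + 1) 2 = 1 := by
    rw [← Nat.coprime_iff_gcd_eq_one]; exact Nat.coprime_two_right.2 hodd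
  apply Nat.ModEq.cancel_left_of_coprime hc
  have h : ∀ r : ℕ, ((r * (r - 1) / 2 : ℕ) : ℤ) * 2 = r * (r - 1) := by
    intro r
    cases r with
    | zero => simp
    | succ n =>
      have := two_tri n
      rw [Nat.add_sub_cancel, mul_comm (n + 1) n]
      zify at this ⊢
      linear_combination this
  rw [← Int.natCast_modEq_iff, Int.modEq_iff_dvd]
  refine ⟨2 * (r + 1) + 1 - (s + r + 1) + 2 * i * (r - s), ?_⟩
  have h1 := h r
  have h2 := h s
  generalize r * (r - 1) / 2 = u at *
  generalize s * (s - 1) / 2 = v at *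
  push_cast
  linear_combination h1 - h2

lemma sym_sum (q : ℂ) (N : ℕ) (hN : 0 < N) (hodd : Odd N) (hp : IsPrimitiveRoot q N)
    (i : ℕ) (φ : ℕ → ℂ) :
    ∑ r ∈ range N, q ^ (r * (r - 1) / 2 + i * (r ^ 2 + r)) * q ^ (2 * r + 1) * φ r =
      ∑ r ∈ range N, q ^ (r * (r - 1) / 2 + i * (r ^ 2 + r)) * φ (N - 1 - r) := by
  rw [← Finset.sum_range_reflect]
  apply Finset.sum_congr rfl
  intro r hr
  have hrN := Finset.mem_range.1 hr
  rw [← sym_pow q N hN hodd hp i (N - 1 - r) (by omega)]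
  rw [show N - 1 - (N - 1 - r) = r by omega]

lemma Z_formula (q : ℂ) (N k : ℕ) (hN : 0 < N) (hodd : Odd N) (hp : IsPrimitiveRoot q N) :
    -(2 * N : ℂ) * Z (k + 2) N q =
      ∑ r ∈ range N, q ^ (r * (r - 1) / 2 + (k + 1) * (r ^ 2 + r)) *
        ((2 * k + 3) * (2 * r + 1 - N) - 2) := by
  rw [Z_eq q N k hN hp]
  have hne : ∀ j, 1 - -(q * 1) * q ^ j ≠ 0 := by
    intro j h
    have h1 : q ^ (j + 1) = -1 := by rw [pow_succ]; linear_combination h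
    have h2 : (q ^ (j + 1)) ^ N = (q ^ N) ^ (j + 1) := by ring
    rw [h1, hp.pow_eq_one, hodd.neg_one_pow, one_pow] at h2
    norm_num at h2
  have hd := bB_diff q hne (k + 1) (N - 1)
  set w : ℕ → ℂ := fun r => q ^ (r * (r - 1) / 2 + (k + 1) * (r ^ 2 + r)) with hw
  have hpow : HasDerivAt (fun y : ℂ => y ^ (2 * N)) (2 * N) 1 := by
    have := hasDerivAt_pow (2 * N) (1 : ℂ)
    simpa using this
  have hL : HasDerivAt (fun y : ℂ => (1 - y ^ (2 * N)) * bB q y (k + 1) (N - 1))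
      (-(2 * N : ℂ) * bB q 1 (k + 1) (N - 1)) 1 := by
    have := (hpow.const_sub 1).fun_mul hd.hasDerivAt
    simpa using this
  have hRr : ∀ r ∈ range N, HasDerivAt (fun y : ℂ => w r * y ^ ((2 * (k + 1) + 1) * r) *
      (1 - y ^ 2 * q ^ (2 * r + 1)))
      (w r * ((2 * k + 3) * r) * (1 - q ^ (2 * r + 1)) + w r * (-(2 * q ^ (2 * r + 1)))) 1 := by
    intro r _
    have h1 : HasDerivAt (fun y : ℂ => w r * y ^ ((2 * (k + 1) + 1) * r))
        (w r * ((2 * k + 3) * r)) 1 := by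
      have := (hasDerivAt_pow ((2 * (k + 1) + 1) * r) (1 : ℂ)).const_mul (w r)
      rw [one_pow, mul_one] at this
      have e : w r * ((2 * k + 3) * r) = w r * (((2 * (k + 1) + 1) * r : ℕ) : ℂ) := by
        push_cast; ring
      rw [e]
      exact this
    have h2 : HasDerivAt (fun y : ℂ => 1 - y ^ 2 * q ^ (2 * r + 1)) (-(2 * q ^ (2 * r + 1))) 1 := by
      have := ((hasDerivAt_pow 2 (1 : ℂ)).mul_const (q ^ (2 * r + 1))).const_sub 1
      simpa using this
    have := h1.fun_mul h2
    simpa using this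
  have hR := HasDerivAt.fun_sum hRr
  have hev : (fun y : ℂ => (1 - y ^ (2 * N)) * bB q y (k + 1) (N - 1)) =ᶠ[nhds 1]
      (fun y : ℂ => ∑ r ∈ range N, w r * y ^ ((2 * (k + 1) + 1) * r) *
        (1 - y ^ 2 * q ^ (2 * r + 1))) := by
    have h1 : ∀ᶠ y in nhdsWithin (1 : ℂ) {1}ᶜ, y ^ (2 * N) ≠ 1 :=
      hpow.eventually_ne (by
        have : (N : ℂ) ≠ 0 := Nat.cast_ne_zero.2 hN.ne'
        simpa using this)
    rw [eventually_nhdsWithin_iff] at h1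
    filter_upwards [h1] with y hy
    by_cases hy1 : y = 1
    · subst hy1
      have h0 := sym_sum q N hN hodd hp (k + 1) (fun _ => 1)
      simp only [mul_one] at h0
      simp only [one_pow, sub_self, zero_mul, mul_one, one_mul, mul_sub, Finset.sum_sub_distrib]
      rw [hw, h0, sub_self]
    · exact main_deform q y N hN hp (hy hy1) (k + 1)
  have heq := (hL.congr_of_eventuallyEq hev.symm).unique hR
  rw [heq]
  have h5 := sym_sum q N hN hodd hp (k + 1) (fun r => (2 * k + 3) * r + 2)
  have h6 : ∑ r ∈ range N, (w r * ((2 * k + 3) * r) * (1 - q ^ (2 * r + 1)) +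
      w r * (-(2 * q ^ (2 * r + 1)))) = ∑ r ∈ range N, w r * ((2 * k + 3) * r) -
      ∑ r ∈ range N, w r * q ^ (2 * r + 1) * ((2 * k + 3) * r + 2) := by
    rw [← Finset.sum_sub_distrib]
    apply Finset.sum_congr rfl
    intro r _
    ring
  rw [h6, h5, ← Finset.sum_sub_distrib]
  apply Finset.sum_congr rfl
  intro r hr
  have hrN := Finset.mem_range.1 hr
  have e1 : ((N - 1 - r : ℕ) : ℂ) = N - 1 - r := by
    rw [Nat.sub_sub, Nat.cast_sub (by omega)]; push_cast; ring
  simp only [hw, e1]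
  ring

lemma sum_blocks (c N : ℕ) (f : ℕ → ℂ) :
    ∑ x ∈ range (c * N), f x = ∑ j ∈ range N, ∑ t ∈ range c, f (c * j + t) := by
  induction N with
  | zero => simp
  | succ n ih => rw [Nat.mul_succ, Finset.sum_range_add, ih, Finset.sum_range_succ]

lemma chi_eval (k j t : ℕ) (ht : t < 4 * k + 6) :
    chiP (k + 2) (((4 * k + 6) * j + t : ℕ) : ℤ) =
      (if t = 2 * k + 1 then 1 else 0) - (if t = 2 * k + 5 then 1 else 0) := by
  have e0 : (4 * ((k + 2 : ℕ) : ℤ) - 2) = 4 * k + 6 := by push_cast; ring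
  have e1 : (((4 * k + 6) * j + t : ℕ) : ℤ) % (4 * k + 6) = t := by
    push_cast
    rw [Int.add_comm, Int.add_mul_emod_self_left]
    exact Int.emod_eq_of_lt (by omega) (by omega)
  have e2 : (2 * ((k + 2 : ℕ) : ℤ) - 3) % (4 * k + 6) = 2 * k + 1 := by
    push_cast
    rw [Int.emod_eq_of_lt (by omega) (by omega)]
    ring
  have e3 : (2 * ((k + 2 : ℕ) : ℤ) + 1) % (4 * k + 6) = 2 * k + 5 := by
    push_cast
    rw [Int.emod_eq_of_lt (by omega) (by omega)]
    ring
  rw [chiP, e0, e1, e2, e3]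
  split_ifs <;> omega

lemma chi_sum (k N : ℕ) (f : ℕ → ℂ) :
    ∑ x ∈ range ((4 * k + 6) * N + 1), f x * (chiP (k + 2) (x : ℤ) : ℂ) =
      ∑ j ∈ range N, (f ((4 * k + 6) * j + (2 * k + 1)) - f ((4 * k + 6) * j + (2 * k + 5))) := by
  rw [Finset.sum_range_succ]
  have h0 : chiP (k + 2) (((4 * k + 6) * N : ℕ) : ℤ) = _ := chi_eval k N 0 (by omega)
  rw [h0, sum_blocks]
  simp only [show ¬ (0 = 2 * k + 1) by omega, show ¬ (0 = 2 * k + 5) by omega, if_false, sub_self,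
    Int.cast_zero, mul_zero, add_zero]
  apply Finset.sum_congr rfl
  intro j _
  have h1 : ∀ t ∈ range (4 * k + 6), f ((4 * k + 6) * j + t) *
      (chiP (k + 2) (((4 * k + 6) * j + t : ℕ) : ℤ) : ℂ) =
      (if t = 2 * k + 1 then f ((4 * k + 6) * j + t) else 0) -
      (if t = 2 * k + 5 then f ((4 * k + 6) * j + t) else 0) := by
    intro t ht
    rw [chi_eval k j t (Finset.mem_range.1 ht)]
    push_cast
    rw [mul_sub, mul_ite, mul_ite, mul_one, mul_zero]
  rw [Finset.sum_congr rfl h1, Finset.sum_sub_distrib, Finset.sum_ite_eq', Finset.sum_ite_eq',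
    if_pos (Finset.mem_range.2 (by omega)), if_pos (Finset.mem_range.2 (by omega))]

lemma exp_one_aux (k j : ℕ) (M : ℤ) (N : ℕ) (hN : 0 < N) (X d : ℂ) (e : ℕ)
    (hX : X ^ 2 - (2 * k + 1) ^ 2 = 8 * (2 * k + 3) * e) :
    Complex.exp (-(2 * Real.pi * Complex.I * M * ((2 * ((k + 2 : ℕ) : ℂ) - 3) ^ 2) /
          (8 * (2 * ((k + 2 : ℕ) : ℂ) - 1) * N))) *
      Complex.exp (2 * Real.pi * Complex.I * M * X ^ 2 / (8 * (2 * ((k + 2 : ℕ) : ℂ) - 1) * N)) =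
    Complex.exp (2 * Real.pi * Complex.I * M / N) ^ e := by
  have hN' : (N : ℂ) ≠ 0 := Nat.cast_ne_zero.2 hN.ne'
  have hk : (2 * (k : ℂ) + 3) ≠ 0 := by
    have : ((2 * k + 3 : ℕ) : ℂ) ≠ 0 := Nat.cast_ne_zero.2 (by omega)
    exact_mod_cast this
  rw [← Complex.exp_add, ← Complex.exp_nat_mul]
  congr 1
  have e1 : (2 * ((k + 2 : ℕ) : ℂ) - 1) = 2 * k + 3 := by push_cast; ring
  have e2 : (2 * ((k + 2 : ℕ) : ℂ) - 3) = 2 * k + 1 := by push_cast; ring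
  rw [e1, e2]
  field_simp
  linear_combination (M : ℂ) * hX

lemma half_cast (r : ℕ) : ((r * (r - 1) / 2 : ℕ) : ℂ) = r * (r - 1) / 2 := by
  cases r with
  | zero => simp
  | succ n =>
    have := two_tri n
    rw [Nat.add_sub_cancel, mul_comm (n + 1) n]
    have h2 : ((n * (n + 1) / 2 : ℕ) : ℂ) * 2 = n * (n + 1) := by exact_mod_cast this
    push_cast
    linear_combination h2 / 2

theorem stmt9 (m : ℕ) (hm : 2 ≤ m) (M : ℤ) (N : ℕ) (hN : 0 < N) (hNodd : Odd N)
    (hMN : IsCoprime M (N : ℤ)) :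
    Z m N (Complex.exp (2 * Real.pi * Complex.I * M / N)) =
      -(1 / (8 * (2 * (m : ℂ) - 1) * (N : ℂ) ^ 2)) *
        Complex.exp (-(2 * Real.pi * Complex.I * M * ((2 * (m : ℂ) - 3) ^ 2) /
          (8 * (2 * m - 1) * N))) *
        ∑ k ∈ Finset.range ((4 * m - 2) * N + 1),
          (k : ℂ) ^ 2 * (chiP m k : ℂ) *
            Complex.exp (2 * Real.pi * Complex.I * M * (k : ℂ) ^ 2 / (8 * (2 * m - 1) * N)) := by

  obtain ⟨k, rfl⟩ : ∃ k, m = k + 2 := ⟨m - 2, by omega⟩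
  have hN' : (N : ℂ) ≠ 0 := Nat.cast_ne_zero.2 hN.ne'
  have hk : (2 * (k : ℂ) + 3) ≠ 0 := by
    have : ((2 * k + 3 : ℕ) : ℂ) ≠ 0 := Nat.cast_ne_zero.2 (by omega)
    exact_mod_cast this
  have hp : IsPrimitiveRoot (Complex.exp (2 * Real.pi * Complex.I * M / N)) N := by
    have h := Complex.isPrimitiveRoot_exp N hN.ne'
    have h2 := h.zpow_of_gcd_eq_one M (Int.isCoprime_iff_gcd_eq_one.1 hMN)
    rw [← Complex.exp_int_mul] at h2
    have h5 : 2 * Real.pi * Complex.I * M / N = (M : ℂ) * (2 * Real.pi * Complex.I / N) := by ring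
    rw [h5]
    exact h2
  have hZ := Z_formula _ N k hN hNodd hp
  have e0 : (4 * (k + 2) - 2) * N + 1 = (4 * k + 6) * N + 1 := by
    rw [show 4 * (k + 2) - 2 = 4 * k + 6 by omega]
  rw [e0]
  have h1 := chi_sum k N (fun x => (x : ℂ) ^ 2 * (Complex.exp (2 * Real.pi * Complex.I * M *
    (x : ℂ) ^ 2 / (8 * (2 * ((k + 2 : ℕ) : ℂ) - 1) * N))))
  have h2 : ∑ x ∈ Finset.range ((4 * k + 6) * N + 1),
          (x : ℂ) ^ 2 * (chiP (k + 2) x : ℂ) *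
            Complex.exp (2 * Real.pi * Complex.I * M * (x : ℂ) ^ 2 /
              (8 * (2 * ((k + 2 : ℕ) : ℂ) - 1) * N)) =
      ∑ x ∈ Finset.range ((4 * k + 6) * N + 1), (x : ℂ) ^ 2 *
        Complex.exp (2 * Real.pi * Complex.I * M * (x : ℂ) ^ 2 /
              (8 * (2 * ((k + 2 : ℕ) : ℂ) - 1) * N)) * (chiP (k + 2) x : ℂ) := by
    apply Finset.sum_congr rfl
    intro x _
    ring
  rw [h2, h1, mul_assoc (-(1 / (8 * (2 * ((k + 2 : ℕ) : ℂ) - 1) * (N : ℂ) ^ 2))), Finset.mul_sum]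
  set q := Complex.exp (2 * Real.pi * Complex.I * M / N) with hq
  have h3 : ∀ j ∈ range N,
      Complex.exp (-(2 * Real.pi * Complex.I * M * ((2 * ((k + 2 : ℕ) : ℂ) - 3) ^ 2) /
          (8 * (2 * ((k + 2 : ℕ) : ℂ) - 1) * N))) *
      ((((4 * k + 6) * j + (2 * k + 1) : ℕ) : ℂ) ^ 2 *
        Complex.exp (2 * Real.pi * Complex.I * M * (((4 * k + 6) * j + (2 * k + 1) : ℕ) : ℂ) ^ 2 /
          (8 * (2 * ((k + 2 : ℕ) : ℂ) - 1) * N)) -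
       (((4 * k + 6) * j + (2 * k + 5) : ℕ) : ℂ) ^ 2 *
        Complex.exp (2 * Real.pi * Complex.I * M * (((4 * k + 6) * j + (2 * k + 5) : ℕ) : ℂ) ^ 2 /
          (8 * (2 * ((k + 2 : ℕ) : ℂ) - 1) * N))) =
      q ^ (j * (j - 1) / 2 + (k + 1) * (j ^ 2 + j)) * ((4 * k + 6) * j + (2 * k + 1)) ^ 2 -
      q ^ (j * (j - 1) / 2 + (k + 1) * (j ^ 2 + j)) * q ^ (2 * j + 1) *
        ((4 * k + 6) * j + (2 * k + 5)) ^ 2 := by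
    intro j _
    have hc : ((j * (j - 1) / 2 + (k + 1) * (j ^ 2 + j) : ℕ) : ℂ) =
        j * (j - 1) / 2 + (k + 1) * (j ^ 2 + j) := by
      rw [Nat.cast_add, half_cast]; push_cast; ring
    have hc2 : ((j * (j - 1) / 2 + (k + 1) * (j ^ 2 + j) + (2 * j + 1) : ℕ) : ℂ) =
        j * (j - 1) / 2 + (k + 1) * (j ^ 2 + j) + (2 * j + 1) := by
      rw [Nat.cast_add, hc]; push_cast; ring
    have a1 := exp_one_aux k j M N hN (((4 * k + 6) * j + (2 * k + 1) : ℕ) : ℂ) 0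
      (j * (j - 1) / 2 + (k + 1) * (j ^ 2 + j)) (by
        rw [hc]; push_cast; ring)
    have a2 := exp_one_aux k j M N hN (((4 * k + 6) * j + (2 * k + 5) : ℕ) : ℂ) 0
      (j * (j - 1) / 2 + (k + 1) * (j ^ 2 + j) + (2 * j + 1)) (by
        rw [hc2]; push_cast; ring)
    rw [pow_add _ _ (2 * j + 1)] at a2
    rw [← hq] at a1 a2
    rw [← a2, ← a1]
    push_cast
    ring
  rw [Finset.sum_congr rfl h3, Finset.sum_sub_distrib,
    sym_sum q N hN hNodd hp (k + 1) (fun j => ((4 * k + 6) * (j : ℂ) + (2 * k + 5)) ^ 2),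
    ← Finset.sum_sub_distrib]
  have h4 : Z (k + 2) N q = -(1 / (2 * N)) * (-(2 * N : ℂ) * Z (k + 2) N q) := by
    field_simp
  rw [h4, hZ, Finset.mul_sum, Finset.mul_sum]
  apply Finset.sum_congr rfl
  intro r hr
  have hrN := Finset.mem_range.1 hr
  have e1 : ((N - 1 - r : ℕ) : ℂ) = N - 1 - r := by
    rw [Nat.sub_sub, Nat.cast_sub (by omega)]; push_cast; ring
  have e2 : (2 * ((k + 2 : ℕ) : ℂ) - 1) = 2 * k + 3 := by push_cast; ring
  rw [e1, e2]
  field_simp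
  ring
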